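/- Let L > 0 and let ξ₁, …, ξ_d be real-valued random variables (not assumed independent) satisfying E exp(ξ_j²/L²) ≤ e for every j ∈ {1, …, d}. Then with probability strictly greater than 1/2, simultaneously for every j ∈ {1, …, d}, ξ_j^♯ ≤ √6·L·√(log(ed/j)); that is, Pr( max_{1 ≤ j ≤ d} ξ_j^♯/√(log(ed/j)) ≤ √6·L ) > 1/2. In particular, along the way one has, for every j, Pr( (1/j)∑_{k ≤ j} (ξ_k^♯)² ≥ 2L²·log(ed/j) ) ≤ j/(ed). -/

import Mathlib

open MeasureTheory

/-- The nonincreasing rearrangement of `(|t_j|)_{j=1}^d`. -/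
noncomputable def sharpOrd {d : ℕ} (t : Fin d → ℝ) : Fin d → ℝ :=
  fun i => |t (Tuple.sort (fun j => |t j|) i.rev)|

/-!
The sum `S = ∑ exp (ξ_k² / L²)` does not change when `|ξ_1|, …, |ξ_d|` are rearranged, so Jensen's
inequality on the `j` largest values shows that the mean of their squares is at most
`L² log (S / j)`. If `𝔼 exp (ξ_k² / L²) ≤ K` for all `k`, then `𝔼 S ≤ K d` by linearity, without
any independence, and Markov's inequality for `S` alone gives both tail bounds: at level
`j (K d / j)^p` it bounds the mean for a single `j`, and at level `d K^p ≤ j (K d / j)^p` it bounds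
the means for all `j` simultaneously, hence also the smaller `(ξ_j^♯)²`. The theorem is the case
`K = e`, with `p = 6` for the simultaneous bound and `p = 2` for the single one.
-/

theorem card_mul_exp_mean_le_sum_exp {ι : Type*} (s : Finset ι) (f : ι → ℝ) :
    s.card * Real.exp ((∑ k ∈ s, f k) / s.card) ≤ ∑ k ∈ s, Real.exp (f k) := by
  rcases s.eq_empty_or_nonempty with rfl | hs
  · simp
  have hcard : (0 : ℝ) < s.card := by exact_mod_cast hs.card_pos
  have hjensen := convexOn_exp.map_sum_le (t := s) (w := fun _ => (s.card : ℝ)⁻¹) (p := f)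
    (fun _ _ => by positivity) (by simp [hcard.ne']) (fun _ _ => Set.mem_univ _)
  simp only [smul_eq_mul, ← Finset.mul_sum] at hjensen
  rwa [inv_mul_eq_div, inv_mul_eq_div, le_div_iff₀' hcard] at hjensen

theorem mul_rpow_le_mul_mul_div_rpow {x y K p : ℝ} (hx : 0 < x) (hxy : x ≤ y) (hK : 0 ≤ K)
    (hp : 1 ≤ p) : y * K ^ p ≤ x * (K * y / x) ^ p := by
  have hratio : 1 ≤ y / x := (one_le_div hx).mpr hxy
  calc y * K ^ p = x * (K ^ p * (y / x)) := by field_simp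
    _ ≤ x * (K ^ p * (y / x) ^ p) := by
      gcongr
      exact Real.self_le_rpow_of_one_le hratio hp
    _ = x * (K * y / x) ^ p := by
      rw [mul_div_assoc, Real.mul_rpow hK (zero_le_one.trans hratio)]

theorem measure_le_ofReal_integral_div {Ω : Type*} [MeasurableSpace Ω] {μ : Measure Ω}
    {f : Ω → ℝ} (hf : 0 ≤ᵐ[μ] f) (hfi : Integrable f μ) {a : ℝ} (ha : 0 < a) :
    μ {ω | a ≤ f ω} ≤ ENNReal.ofReal ((∫ ω, f ω ∂μ) / a) := by
  rw [ENNReal.ofReal_div_of_pos ha, ofReal_integral_eq_lintegral_ofReal hfi hf]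
  refine le_trans (measure_mono fun ω hω => ENNReal.ofReal_le_ofReal hω) ?_
  exact meas_ge_le_lintegral_div hfi.aemeasurable.ennreal_ofReal
    (ENNReal.ofReal_pos.mpr ha).ne' ENNReal.ofReal_ne_top

section Rearrangement

variable {d : ℕ} (t : Fin d → ℝ)

/-- The mean of the `j + 1` largest among the `t_k ^ 2`; since `j : Fin d` counts from `0`, this is
`(1/j) ∑_{k ≤ j} (t_k^♯)²` for the `1`-based index `j`. -/
noncomputable def topSqMean (j : Fin d) : ℝ :=
  (1 / ((j : ℕ) + 1 : ℝ)) *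
    ∑ k ∈ Finset.univ.filter (fun k : Fin d => (k : ℕ) ≤ (j : ℕ)), sharpOrd t k ^ 2

/-- The exponential sum `∑ exp (t_k ^ 2 / L ^ 2)`, whose expectation at a random vector is
controlled by the exponential moments of the coordinates. -/
noncomputable def expSqSum (L : ℝ) : ℝ :=
  ∑ k, Real.exp (t k ^ 2 / L ^ 2)

theorem sharpOrd_nonneg (j : Fin d) : 0 ≤ sharpOrd t j :=
  abs_nonneg _

theorem sharpOrd_antitone : Antitone (sharpOrd t) := fun _ _ h =>
  Tuple.monotone_sort (fun j => |t j|) (Fin.rev_le_rev.mpr h)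

theorem sum_comp_sharpOrd {M : Type*} [AddCommMonoid M] (f : ℝ → M) :
    ∑ k, f (sharpOrd t k) = ∑ k, f |t k| :=
  Equiv.sum_comp (Fin.revPerm.trans (Tuple.sort fun j => |t j|)) fun k => f |t k|

theorem expSqSum_sharpOrd (L : ℝ) : expSqSum (sharpOrd t) L = expSqSum t L := by
  refine (sum_comp_sharpOrd t fun x => Real.exp (x ^ 2 / L ^ 2)).trans ?_
  exact Finset.sum_congr rfl fun k _ => by rw [sq_abs]

theorem card_filter_val_le (j : Fin d) :
    (Finset.univ.filter fun k : Fin d => (k : ℕ) ≤ (j : ℕ)).card = (j : ℕ) + 1 :=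
  (congrArg Finset.card Finset.filter_ge_eq_Iic).trans (Fin.card_Iic j)

theorem sharpOrd_sq_le_topSqMean (j : Fin d) : sharpOrd t j ^ 2 ≤ topSqMean t j := by
  have hj : (0 : ℝ) < (j : ℕ) + 1 := by positivity
  have hsum := Finset.card_nsmul_le_sum
    (Finset.univ.filter fun k : Fin d => (k : ℕ) ≤ (j : ℕ)) (fun k => sharpOrd t k ^ 2)
    (sharpOrd t j ^ 2) fun k hk =>
      pow_le_pow_left₀ (sharpOrd_nonneg t j) (sharpOrd_antitone t (Finset.mem_filter.mp hk).2) 2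
  rw [card_filter_val_le, nsmul_eq_mul, Nat.cast_add_one] at hsum
  rwa [topSqMean, one_div_mul_eq_div, le_div_iff₀' hj]

theorem mul_exp_topSqMean_le_expSqSum (L : ℝ) (j : Fin d) :
    ((j : ℕ) + 1) * Real.exp (topSqMean t j / L ^ 2) ≤ expSqSum t L := by
  have hjensen := card_mul_exp_mean_le_sum_exp
    (Finset.univ.filter fun k : Fin d => (k : ℕ) ≤ (j : ℕ)) fun k => sharpOrd t k ^ 2 / L ^ 2
  have hmean : (∑ k ∈ Finset.univ.filter (fun k : Fin d => (k : ℕ) ≤ (j : ℕ)),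
      sharpOrd t k ^ 2 / L ^ 2) / ((j : ℕ) + 1) = topSqMean t j / L ^ 2 := by
    rw [topSqMean, one_div_mul_eq_div, ← Finset.sum_div, div_right_comm]
  rw [card_filter_val_le, Nat.cast_add_one, hmean] at hjensen
  calc ((j : ℕ) + 1) * Real.exp (topSqMean t j / L ^ 2)
      ≤ ∑ k ∈ Finset.univ.filter (fun k : Fin d => (k : ℕ) ≤ (j : ℕ)),
          Real.exp (sharpOrd t k ^ 2 / L ^ 2) := hjensen
    _ ≤ expSqSum (sharpOrd t) L :=
      Finset.sum_le_univ_sum_of_nonneg fun _ => (Real.exp_pos _).le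
    _ = expSqSum t L := expSqSum_sharpOrd t L

variable {t} {L K p : ℝ} {j : Fin d}

theorem mul_rpow_le_expSqSum_of_le_topSqMean (hL : L ≠ 0) (hK : 0 < K)
    (h : p * L ^ 2 * Real.log (K * d / ((j : ℕ) + 1)) ≤ topSqMean t j) :
    ((j : ℕ) + 1) * (K * d / ((j : ℕ) + 1)) ^ p ≤ expSqSum t L := by
  have hd : (0 : ℝ) < d := by exact_mod_cast j.pos
  refine le_trans ?_ (mul_exp_topSqMean_le_expSqSum t L j)
  rw [Real.rpow_def_of_pos (by positivity)]
  gcongr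
  rw [le_div_iff₀ (by positivity)]
  linarith

theorem topSqMean_lt_of_expSqSum_lt (hL : L ≠ 0) (hK : 0 < K) (hp : 1 ≤ p)
    (h : expSqSum t L < d * K ^ p) (j : Fin d) :
    topSqMean t j < p * L ^ 2 * Real.log (K * d / ((j : ℕ) + 1)) := by
  have hjd : ((j : ℕ) + 1 : ℝ) ≤ d := by exact_mod_cast j.isLt
  by_contra! hj
  exact h.not_ge <|
    (mul_rpow_le_mul_mul_div_rpow (by positivity) hjd hK.le hp).trans
      (mul_rpow_le_expSqSum_of_le_topSqMean hL hK hj)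

theorem sharpOrd_le_of_topSqMean_le {x : ℝ} (hL : 0 ≤ L) (hp : 0 ≤ p)
    (h : topSqMean t j ≤ p * L ^ 2 * x) : sharpOrd t j ≤ √p * L * √x := by
  calc sharpOrd t j ≤ √(p * L ^ 2 * x) :=
        Real.le_sqrt_of_sq_le ((sharpOrd_sq_le_topSqMean t j).trans h)
    _ = √p * L * √x := by
        rw [Real.sqrt_mul (by positivity), Real.sqrt_mul hp, Real.sqrt_sq hL]

end Rearrangement

section Probability

variable {d : ℕ} {Ω : Type*} [MeasurableSpace Ω] {P : Measure Ω} {L K : ℝ} {ξ : Fin d → Ω → ℝ}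

theorem measure_le_expSqSum_le (hint : ∀ j, Integrable (fun ω => Real.exp (ξ j ω ^ 2 / L ^ 2)) P)
    (hexp : ∀ j, ∫ ω, Real.exp (ξ j ω ^ 2 / L ^ 2) ∂P ≤ K) {a : ℝ} (ha : 0 < a) :
    P {ω | a ≤ expSqSum (fun k => ξ k ω) L} ≤ ENNReal.ofReal (K * d / a) := by
  have hmean : ∫ ω, expSqSum (fun k => ξ k ω) L ∂P ≤ K * d := by
    calc ∫ ω, expSqSum (fun k => ξ k ω) L ∂P
        = ∑ k, ∫ ω, Real.exp (ξ k ω ^ 2 / L ^ 2) ∂P := integral_finsetSum _ fun k _ => hint k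
      _ ≤ ∑ _k : Fin d, K := Finset.sum_le_sum fun k _ => hexp k
      _ = K * d := by simp [mul_comm]
  calc P {ω | a ≤ expSqSum (fun k => ξ k ω) L}
      ≤ ENNReal.ofReal ((∫ ω, expSqSum (fun k => ξ k ω) L ∂P) / a) :=
        measure_le_ofReal_integral_div
          (Filter.Eventually.of_forall fun _ => Finset.sum_nonneg fun _ _ => (Real.exp_pos _).le)
          (integrable_finsetSum _ fun k _ => hint k) ha
    _ ≤ ENNReal.ofReal (K * d / a) := by gcongr

variable [IsProbabilityMeasure P]

theorem one_le_of_integral_exp_sq_le {X : Ω → ℝ}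
    (hint : Integrable (fun ω => Real.exp (X ω ^ 2 / L ^ 2)) P)
    (hexp : ∫ ω, Real.exp (X ω ^ 2 / L ^ 2) ∂P ≤ K) : 1 ≤ K := by
  calc (1 : ℝ) = ∫ _, (1 : ℝ) ∂P := by simp
    _ ≤ ∫ ω, Real.exp (X ω ^ 2 / L ^ 2) ∂P :=
      integral_mono (integrable_const 1) hint fun _ => Real.one_le_exp (by positivity)
    _ ≤ K := hexp

theorem measure_le_topSqMean_le (hL : L ≠ 0)
    (hint : ∀ j, Integrable (fun ω => Real.exp (ξ j ω ^ 2 / L ^ 2)) P)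
    (hexp : ∀ j, ∫ ω, Real.exp (ξ j ω ^ 2 / L ^ 2) ∂P ≤ K) (p : ℝ) (j : Fin d) :
    P {ω | p * L ^ 2 * Real.log (K * d / ((j : ℕ) + 1)) ≤ topSqMean (fun k => ξ k ω) j} ≤
      ENNReal.ofReal ((((j : ℕ) + 1) / (K * d)) ^ (p - 1)) := by
  have hd : (0 : ℝ) < d := by exact_mod_cast j.pos
  have hK : 0 < K := zero_lt_one.trans_le (one_le_of_integral_exp_sq_le (hint j) (hexp j))
  have hlevel : K * d / (((j : ℕ) + 1) * (K * d / ((j : ℕ) + 1)) ^ p) =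
      (((j : ℕ) + 1) / (K * d)) ^ (p - 1) := by
    rw [← inv_div (K * d), Real.inv_rpow (by positivity), ← Real.rpow_neg (by positivity), neg_sub,
      Real.rpow_sub (by positivity), Real.rpow_one, div_div]
  rw [← hlevel]
  exact (measure_mono fun ω hω => mul_rpow_le_expSqSum_of_le_topSqMean hL hK hω).trans
    (measure_le_expSqSum_le hint hexp (by positivity))

theorem one_sub_le_measure_forall_topSqMean_lt (hL : L ≠ 0)
    (hint : ∀ j, Integrable (fun ω => Real.exp (ξ j ω ^ 2 / L ^ 2)) P)
    (hexp : ∀ j, ∫ ω, Real.exp (ξ j ω ^ 2 / L ^ 2) ∂P ≤ K) {p : ℝ} (hp : 1 ≤ p) :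
    1 - ENNReal.ofReal (K ^ (1 - p)) ≤
      P {ω | ∀ j : Fin d,
        topSqMean (fun k => ξ k ω) j < p * L ^ 2 * Real.log (K * d / ((j : ℕ) + 1))} := by
  rcases Nat.eq_zero_or_pos d with rfl | hd
  · simp
  have hK : 0 < K :=
    zero_lt_one.trans_le (one_le_of_integral_exp_sq_le (hint ⟨0, hd⟩) (hexp ⟨0, hd⟩))
  have hlevel : K * d / (d * K ^ p) = K ^ (1 - p) := by
    rw [Real.rpow_sub hK, Real.rpow_one]
    field_simp
  have hlarge : P {ω | d * K ^ p ≤ expSqSum (fun k => ξ k ω) L} ≤ ENNReal.ofReal (K ^ (1 - p)) :=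
    hlevel ▸ measure_le_expSqSum_le hint hexp (by positivity)
  rw [tsub_le_iff_right, ← measure_univ (μ := P)]
  refine (measure_univ_le_add_compl _).trans (add_le_add_right ?_ _)
  refine (measure_mono fun ω hω => ?_).trans hlarge
  by_contra hlt
  exact hω (topSqMean_lt_of_expSqSum_lt hL hK hp (not_le.mp hlt))

end Probability

theorem stmt16_general {d : ℕ} {Ω : Type*} [MeasurableSpace Ω] {P : Measure Ω}
    [IsProbabilityMeasure P] {L K p : ℝ} (hL : 0 < L) (hp : 1 ≤ p) {ξ : Fin d → Ω → ℝ}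
    (hint : ∀ j, Integrable (fun ω => Real.exp (ξ j ω ^ 2 / L ^ 2)) P)
    (hexp : ∀ j, ∫ ω, Real.exp (ξ j ω ^ 2 / L ^ 2) ∂P ≤ K) :
    1 - ENNReal.ofReal (K ^ (1 - p)) ≤
      P {ω | ∀ j : Fin d, sharpOrd (fun k => ξ k ω) j ≤
        √p * L * √(Real.log (K * d / ((j : ℕ) + 1)))} ∧
    ∀ j : Fin d,
      P {ω | p * L ^ 2 * Real.log (K * d / ((j : ℕ) + 1)) ≤ topSqMean (fun k => ξ k ω) j} ≤
        ENNReal.ofReal ((((j : ℕ) + 1) / (K * d)) ^ (p - 1)) :=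
  ⟨(one_sub_le_measure_forall_topSqMean_lt hL.ne' hint hexp hp).trans <|
      measure_mono fun _ hω j =>
        sharpOrd_le_of_topSqMean_le hL.le (zero_le_one.trans hp) (hω j).le,
    measure_le_topSqMean_le hL.ne' hint hexp p⟩

theorem one_half_lt_one_sub_exp_one_rpow :
    (1 / 2 : ENNReal) < 1 - ENNReal.ofReal (Real.exp 1 ^ (1 - 6 : ℝ)) := by
  have hexp : Real.exp 1 ^ (1 - 6 : ℝ) < 1 / 2 := by
    rw [Real.exp_one_rpow, show (1 - 6 : ℝ) = -5 by norm_num, Real.exp_neg, ← one_div]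
    exact one_div_lt_one_div_of_lt two_pos (by linarith [Real.add_one_le_exp 5])
  calc (1 / 2 : ENNReal) = ENNReal.ofReal (1 / 2) := by
        rw [ENNReal.ofReal_div_of_pos two_pos, ENNReal.ofReal_one, ENNReal.ofReal_ofNat]
    _ < ENNReal.ofReal (1 - Real.exp 1 ^ (1 - 6 : ℝ)) :=
        (ENNReal.ofReal_lt_ofReal_iff_of_nonneg one_half_pos.le).mpr (by linarith)
    _ = 1 - ENNReal.ofReal (Real.exp 1 ^ (1 - 6 : ℝ)) := by
        rw [ENNReal.ofReal_sub _ (by positivity), ENNReal.ofReal_one]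

/-- if `𝔼 exp(ξ_j²/L²) ≤ e` for each of `d` (not necessarily independent)
random variables `ξ_j`, then with probability strictly greater than `1/2`,
simultaneously for every `j`, `ξ_j^♯ ≤ √6 L √(log(ed/j))`; along the way, for every `j`,
`Pr((1/j)∑_{k ≤ j}(ξ_k^♯)² ≥ 2L² log(ed/j)) ≤ j/(ed)`. (The `1`-based index `j`
corresponds to `(j : ℕ) + 1` for `j : Fin d`.) -/
theorem stmt16 (d : ℕ) {Ω : Type*} [MeasurableSpace Ω] (P : Measure Ω)
    [IsProbabilityMeasure P]
    (L : ℝ) (hL : 0 < L) (ξ : Fin d → Ω → ℝ) (hmeas : ∀ j, Measurable (ξ j))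
    (hint : ∀ j, Integrable (fun ω => Real.exp ((ξ j ω) ^ 2 / L ^ 2)) P)
    (hexp : ∀ j, ∫ ω, Real.exp ((ξ j ω) ^ 2 / L ^ 2) ∂P ≤ Real.exp 1) :
    (1 / 2 : ENNReal) <
      P {ω | ∀ j : Fin d, sharpOrd (fun k => ξ k ω) j ≤
        Real.sqrt 6 * L *
          Real.sqrt (Real.log (Real.exp 1 * (d : ℝ) / ((j : ℕ) + 1)))} ∧
    ∀ j : Fin d,
      P {ω | 2 * L ^ 2 * Real.log (Real.exp 1 * (d : ℝ) / ((j : ℕ) + 1)) ≤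
          (1 / ((j : ℕ) + 1 : ℝ)) *
            ∑ k ∈ Finset.univ.filter (fun k : Fin d => (k : ℕ) ≤ (j : ℕ)),
              (sharpOrd (fun l => ξ l ω) k) ^ 2} ≤
        ENNReal.ofReal (((j : ℕ) + 1) / (Real.exp 1 * d)) := by
  refine ⟨one_half_lt_one_sub_exp_one_rpow.trans_le
    (stmt16_general hL (by norm_num) hint hexp).1, fun j => ?_⟩
  simpa only [topSqMean, show (2 : ℝ) - 1 = 1 by norm_num, Real.rpow_one] using
    (stmt16_general hL one_le_two hint hexp).2 j
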